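/- Let β > 1/2, m > 0, let X be a random variable distributed on ℝ₊ with the inverse Gamma density h_{β,m}(x) = C_{β,m} x^{−2β} e^{−m/x}, and let x̄_{β,m} denote the median of X. Then for every 1 ≤ p < ∞ and every smooth function φ on ℝ₊ with E[|φ(X)|^p] finite, E[|φ(X) − E[φ(X)]|^p] ≤ (p D(β,m))^p E[X^p |φ'(X)|^p], where D(β,m) = 1/(x̄_{β,m} · h_{β,m}(x̄_{β,m})). -/

import Mathlib

open MeasureTheory Set

theorem young_aux (p a b : ℝ) (hp : 1 ≤ p) (ha : 0 ≤ a) (hb : 0 ≤ b) :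
    p * a ^ (p - 1) * b ≤ (p - 1) * a ^ p + b ^ p := by
  have hp0 : 0 < p := by linarith
  have := Real.geom_mean_le_arith_mean2_weighted (w₁ := (p-1)/p) (w₂ := 1/p)
    (p₁ := a^p) (p₂ := b^p) (div_nonneg (by linarith) hp0.le) (by positivity)
    (by positivity) (by positivity) (by field_simp; ring)
  rw [← Real.rpow_mul ha, ← Real.rpow_mul hb, mul_div_cancel₀ _ hp0.ne', mul_div_cancel₀ _ hp0.ne',
    Real.rpow_one] at this
  calc p * a ^ (p - 1) * b = p * (a ^ (p-1) * b) := by ring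
    _ ≤ p * ((p-1)/p * a^p + 1/p * b^p) := by gcongr
    _ = _ := by field_simp

theorem hardy_aux (a b p k : ℝ) (hab : a ≤ b) (hp : 1 ≤ p) (hk : 0 ≤ k) (f f' w q T : ℝ → ℝ)
    (hf : ∀ x ∈ Icc a b, HasDerivAt f (f' x) x) (hf' : ContinuousOn f' (Icc a b))
    (hw : ContinuousOn w (Icc a b)) (hw0 : ∀ x ∈ Icc a b, 0 ≤ w x)
    (hq : ContinuousOn q (Icc a b)) (hq0 : ∀ x ∈ Icc a b, 0 ≤ q x)
    (hT : ∀ x ∈ Icc a b, HasDerivAt T (-w x) x) (hT0 : ∀ x ∈ Icc a b, 0 ≤ T x)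
    (hTk : ∀ x ∈ Icc a b, T x ≤ k * (q x * w x)) :
    ∫ x in a..b, |f x - f a| ^ p * w x ≤
      (p * k) ^ p * ∫ x in a..b, (q x ^ p * |f' x| ^ p * w x) := by
  have hp0 : 0 < p := by linarith
  have hu : uIcc a b = Icc a b := uIcc_of_le hab
  have hfc : ContinuousOn f (Icc a b) := fun x hx => (hf x hx).continuousAt.continuousWithinAt
  have hTc : ContinuousOn T (Icc a b) := fun x hx => (hT x hx).continuousAt.continuousWithinAt
  have habs : ContinuousOn (fun x => |f' x|) (Icc a b) := hf'.abs
  have hii : ∀ x ∈ Icc a b, IntervalIntegrable (fun x => |f' x|) volume a x := by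
    intro x hx
    apply ContinuousOn.intervalIntegrable
    rw [uIcc_of_le hx.1]
    exact habs.mono (Icc_subset_Icc_right hx.2)
  set v : ℝ → ℝ := fun x => ∫ t in a..x, |f' t| with hv
  have hvc : ContinuousOn v (Icc a b) := by
    rw [← hu]
    apply intervalIntegral.continuousOn_primitive_interval
    rw [hu]; exact habs.integrableOn_Icc
  have hv0 : ∀ x ∈ Icc a b, 0 ≤ v x := fun x hx =>
    intervalIntegral.integral_nonneg hx.1 (fun _ _ => abs_nonneg _)
  have hvd : ∀ x ∈ Ioo a b, HasDerivAt v (|f' x|) x := by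
    intro x hx
    have hx' := Ioo_subset_Icc_self hx
    apply intervalIntegral.integral_hasDerivAt_right (hii x hx')
    · exact (habs.mono Ioo_subset_Icc_self).stronglyMeasurableAtFilter isOpen_Ioo x hx
    · exact habs.continuousAt (Icc_mem_nhds hx.1 hx.2)
  have hfv : ∀ x ∈ Icc a b, |f x - f a| ≤ v x := by
    intro x hx
    have : ∫ t in a..x, f' t = f x - f a := by
      apply intervalIntegral.integral_eq_sub_of_hasDerivAt
      · intro y hy
        rw [uIcc_of_le hx.1] at hy
        exact hf y ⟨hy.1, hy.2.trans hx.2⟩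
      · apply ContinuousOn.intervalIntegrable
        rw [uIcc_of_le hx.1]
        exact hf'.mono (Icc_subset_Icc_right hx.2)
    rw [← this]
    exact intervalIntegral.abs_integral_le_integral_abs hx.1
  have hvp : ContinuousOn (fun x => v x ^ p) (Icc a b) :=
    hvc.rpow_const (fun _ _ => Or.inr hp0.le)
  have hvp1 : ContinuousOn (fun x => v x ^ (p-1)) (Icc a b) :=
    hvc.rpow_const (fun _ _ => Or.inr (by linarith))
  have hI1 : IntervalIntegrable (fun x => v x ^ p * w x) volume a b :=
    (hu ▸ hvp.mul hw : ContinuousOn _ (uIcc a b)).intervalIntegrable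
  have hI2c : ContinuousOn (fun x => q x ^ p * |f' x| ^ p * w x) (Icc a b) :=
    (((hq.rpow_const (fun _ _ => Or.inr hp0.le)).mul
      (habs.rpow_const (fun _ _ => Or.inr hp0.le))).mul hw)
  have hI2 : IntervalIntegrable (fun x => q x ^ p * |f' x| ^ p * w x) volume a b :=
    (hu ▸ hI2c : ContinuousOn _ (uIcc a b)).intervalIntegrable
  have hI3 : IntervalIntegrable (fun x => |f x - f a| ^ p * w x) volume a b := by
    apply ContinuousOn.intervalIntegrable
    rw [hu]
    exact (((hfc.sub continuousOn_const).abs).rpow_const (fun _ _ => Or.inr hp0.le)).mul hw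
  have hI4 : IntervalIntegrable (fun x => (|f' x| * p * v x ^ (p-1)) * T x + v x ^ p * (-w x))
      volume a b := by
    apply ContinuousOn.intervalIntegrable
    rw [hu]
    exact (((habs.mul continuousOn_const).mul hvp1).mul hTc).add (hvp.mul hw.neg)
  have hFTC := intervalIntegral.integral_eq_sub_of_hasDerivAt_of_le hab
    (f := fun x => v x ^ p * T x) (hvp.mul hTc)
    (fun x hx => ((hvd x hx).rpow_const (Or.inr hp)).mul (hT x (Ioo_subset_Icc_self hx))) hI4
  have hva : v a = 0 := by simp [hv]
  have hb : b ∈ Icc a b := right_mem_Icc.2 hab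
  have hN : 0 ≤ ∫ x in a..b, ((|f' x| * p * v x ^ (p-1)) * T x + v x ^ p * (-w x)) := by
    rw [hFTC]
    simp only [hva, Real.zero_rpow hp0.ne', zero_mul, sub_zero]
    exact mul_nonneg (Real.rpow_nonneg (hv0 b hb) _) (hT0 b hb)
  have hle : ∫ x in a..b, ((|f' x| * p * v x ^ (p-1)) * T x + v x ^ p * (-w x)) ≤
      ∫ x in a..b, ((1/p) * ((p*k)^p * (q x ^ p * |f' x| ^ p * w x)) - (1/p) * (v x ^ p * w x)) := by
    apply intervalIntegral.integral_mono_on hab hI4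
      (((hI2.const_mul _).const_mul _).sub (hI1.const_mul _))
    intro x hx
    have h1 := young_aux p (v x) (p * k * q x * |f' x|) hp (hv0 x hx)
      (by have := hq0 x hx; positivity)
    have h2 : (p * k * q x * |f' x|) ^ p = (p*k)^p * (q x ^ p * |f' x|^p) := by
      rw [mul_assoc (p*k), Real.mul_rpow (by positivity)
        (mul_nonneg (hq0 x hx) (abs_nonneg _)), Real.mul_rpow (hq0 x hx) (abs_nonneg _)]
    rw [h2] at h1
    have h3 : (|f' x| * p * v x ^ (p-1)) * T x ≤ (|f' x| * p * v x ^ (p-1)) * (k * (q x * w x)) := by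
      apply mul_le_mul_of_nonneg_left (hTk x hx)
      have := Real.rpow_nonneg (hv0 x hx) (p-1)
      positivity
    have h4 := mul_le_mul_of_nonneg_right h1 (hw0 x hx)
    have h5 : (|f' x| * p * v x ^ (p-1)) * (k * (q x * w x)) ≤
       (1/p) * (((p - 1) * v x ^ p + (p*k)^p * (q x ^ p * |f' x|^p)) * w x) := by
      calc _ = (1/p) * (p * v x ^ (p - 1) * (p * k * q x * |f' x|) * w x) := by field_simp
        _ ≤ _ := by gcongr
    have h6 : (1/p) * (((p - 1) * v x ^ p + (p*k)^p * (q x ^ p * |f' x|^p)) * w x) =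
      v x ^ p * w x + ((1/p) * ((p*k)^p * (q x ^ p * |f' x| ^ p * w x)) - (1/p) * (v x ^ p * w x)) := by
      field_simp; ring
    linarith
  rw [intervalIntegral.integral_sub ((hI2.const_mul _).const_mul _) (hI1.const_mul _),
    intervalIntegral.integral_const_mul, intervalIntegral.integral_const_mul,
    intervalIntegral.integral_const_mul, ← mul_sub] at hle
  have h7 := nonneg_of_mul_nonneg_right (hN.trans hle) (by positivity)
  have h8 : ∫ x in a..b, |f x - f a| ^ p * w x ≤ ∫ x in a..b, v x ^ p * w x := by
    apply intervalIntegral.integral_mono_on hab hI3 hI1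
    intro x hx
    exact mul_le_mul_of_nonneg_right
      (Real.rpow_le_rpow (abs_nonneg _) (hfv x hx) hp0.le) (hw0 x hx)
  linarith

theorem add_rpow_aux (p a b : ℝ) (hp : 1 ≤ p) :
    |a - b| ^ p ≤ 2 ^ (p - 1) * (|a| ^ p + |b| ^ p) := by
  have h1 : |a - b| ^ p ≤ (|a| + |b|) ^ p :=
    Real.rpow_le_rpow (abs_nonneg _) (abs_sub a b) (by linarith)
  refine h1.trans ?_
  have := NNReal.rpow_add_le_mul_rpow_add_rpow ⟨|a|, abs_nonneg a⟩ ⟨|b|, abs_nonneg b⟩ hp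
  exact_mod_cast this

theorem wirtinger_inverse_gamma
    (β m : ℝ) (hβ : 1 / 2 < β) (hm : 0 < m)
    (C : ℝ) (hC : 0 < C)
    (h : ℝ → ℝ) (hdef : ∀ x, h x = C * x ^ (-(2 * β)) * Real.exp (-m / x))
    (hnorm : ∫ x in Ioi (0 : ℝ), h x = 1)
    (H : ℝ → ℝ) (hH : ∀ x, H x = ∫ y in Ioo (0 : ℝ) x, h y)
    (xbar : ℝ) (hxbar : 0 < xbar) (hmedian : H xbar = 1 / 2)
    (p : ℝ) (hp : 1 ≤ p)
    (φ : ℝ → ℝ) (hφ : ContDiffOn ℝ (⊤ : ℕ∞) φ (Ioi 0))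
    (hlhs : IntegrableOn (fun x => |φ x| ^ p * h x) (Ioi 0))
    (hrhs : IntegrableOn (fun x => x ^ p * |deriv φ x| ^ p * h x) (Ioi 0)) :
    (∫ x in Ioi (0 : ℝ), |φ x - ∫ y in Ioi (0 : ℝ), φ y * h y| ^ p * h x)
      ≤ (p * (1 / (xbar * h xbar))) ^ p *
          ∫ x in Ioi (0 : ℝ), x ^ p * |deriv φ x| ^ p * h x := by
  have hp0 : 0 < p := by linarith
  have hpos : ∀ x, 0 < x → 0 < h x := by
    intro x hx; rw [hdef]; positivity
  have hcont : ContinuousOn h (Ioi 0) := by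
    have : h = fun x => C * x ^ (-(2 * β)) * Real.exp (-m / x) := funext hdef
    rw [this]
    intro x hx
    have hx' : x ≠ 0 := ne_of_gt hx
    apply ContinuousAt.continuousWithinAt
    have h1 : ContinuousAt (fun x : ℝ => x ^ (-(2 * β))) x :=
      Real.continuousAt_rpow_const _ _ (Or.inl hx')
    have h2 : ContinuousAt (fun x : ℝ => -m / x) x := continuousAt_const.div continuousAt_id hx'
    exact (continuousAt_const.mul h1).mul h2.rexp
  have hint : IntegrableOn h (Ioi 0) := by
    by_contra hc
    rw [integral_undef hc] at hnorm
    norm_num at hnorm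
  have hφd : ∀ x, 0 < x → HasDerivAt φ (deriv φ x) x := by
    intro x hx
    exact ((hφ.differentiableOn (by simp)).differentiableAt (Ioi_mem_nhds hx)).hasDerivAt
  have hφ' : ContinuousOn (deriv φ) (Ioi 0) :=
    hφ.continuousOn_deriv_of_isOpen isOpen_Ioi (by simp)
  have hφc : ContinuousOn φ (Ioi 0) := hφ.continuousOn
  -- key pointwise inequality
  have hkey : ∀ x s, 0 < x → 0 < s → 0 ≤ (x - xbar) * (s - 1) →
      h (x * s) * h xbar ≤ h (xbar * s) * h x := by
    intro x s hx hs hxs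
    simp only [hdef]
    rw [Real.mul_rpow hx.le hs.le, Real.mul_rpow hxbar.le hs.le]
    have he : Real.exp (-m / (x * s)) * Real.exp (-m / xbar) ≤
        Real.exp (-m / (xbar * s)) * Real.exp (-m / x) := by
      rw [← Real.exp_add, ← Real.exp_add, Real.exp_le_exp, ← sub_nonneg]
      have : -m / (xbar * s) + -m / x - (-m / (x * s) + -m / xbar) =
        m * ((x - xbar) * (s - 1)) / (x * xbar * s) := by field_simp; ring
      rw [this]; positivity
    calc _ = (C * C * x ^ (-(2 * β)) * s ^ (-(2 * β)) * xbar ^ (-(2 * β))) *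
          (Real.exp (-m / (x * s)) * Real.exp (-m / xbar)) := by ring
      _ ≤ (C * C * x ^ (-(2 * β)) * s ^ (-(2 * β)) * xbar ^ (-(2 * β))) *
          (Real.exp (-m / (xbar * s)) * Real.exp (-m / x)) := by gcongr
      _ = _ := by ring
  set k : ℝ := 1 / (2 * (xbar * h xbar)) with hk
  have hhx := hpos xbar hxbar
  have hk0 : 0 < k := by positivity
  have hiI : ∀ x y, 0 ≤ x → 0 ≤ y → IntervalIntegrable h volume x y := by
    intro x y hx hy
    rw [intervalIntegrable_iff]
    apply hint.mono_set
    intro z hz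
    exact lt_of_le_of_lt (le_min hx hy) hz.1
  set F : ℝ → ℝ := fun x => ∫ y in (0:ℝ)..x, h y with hF
  have hFd : ∀ x, 0 < x → HasDerivAt F (h x) x := by
    intro x hx
    apply intervalIntegral.integral_hasDerivAt_right (hiI 0 x le_rfl hx.le)
    · exact hcont.stronglyMeasurableAtFilter isOpen_Ioi x hx
    · exact hcont.continuousAt (Ioi_mem_nhds hx)
  have hFx : F xbar = 1 / 2 := by
    rw [← hmedian, hH, hF]
    simp only
    rw [intervalIntegral.integral_of_le hxbar.le, integral_Ioc_eq_integral_Ioo]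
  have hFT : ∀ x, 0 < x → F x + ∫ y in Ioi x, h y = 1 := by
    intro x hx
    rw [← hnorm]
    exact intervalIntegral.integral_interval_add_Ioi hint (hint.mono_set (Ioi_subset_Ioi hx.le))
  have hF0 : ∀ x, 0 < x → 0 ≤ F x := by
    intro x hx
    simp only [hF]
    rw [intervalIntegral.integral_of_le hx.le]
    exact setIntegral_nonneg measurableSet_Ioc (fun y hy => (hpos y hy.1).le)
  have hT0 : ∀ x, 0 < x → 0 ≤ 1 - F x := by
    intro x hx
    rw [← hFT x hx, add_sub_cancel_left]
    exact setIntegral_nonneg measurableSet_Ioi (fun y hy => (hpos y (hx.trans hy)).le)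
  have hFk : ∀ x, 0 < x → x ≤ xbar → F x ≤ k * (x * h x) := by
    intro x hx hxx
    have e : ∀ z, 0 < z → F z = z * ∫ s in (0:ℝ)..1, h (z * s) := by
      intro z hz
      rw [intervalIntegral.mul_integral_comp_mul_left]; simp [hF]
    have ii : ∀ z, 0 < z → IntervalIntegrable (fun s => h (z * s)) volume 0 1 := by
      intro z hz
      have := (hiI 0 z le_rfl hz.le).comp_mul_left (c := z)
      simpa [hz.ne'] using this
    have hle : (∫ s in (0:ℝ)..1, h (x * s) * h xbar) ≤ ∫ s in (0:ℝ)..1, h (xbar * s) * h x := by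
      apply intervalIntegral.integral_mono_on_of_le_Ioo zero_le_one ((ii x hx).mul_const _)
        ((ii xbar hxbar).mul_const _)
      intro s hs
      exact hkey x s hx hs.1 (mul_nonneg_of_nonpos_of_nonpos (by linarith) (by linarith [hs.2]))
    rw [intervalIntegral.integral_mul_const, intervalIntegral.integral_mul_const] at hle
    have e1 := e x hx
    have e2 := e xbar hxbar
    rw [hFx] at e2
    rw [hk, div_mul_eq_mul_div, le_div_iff₀ (by positivity), e1]
    calc _ = 2 * x * xbar * ((∫ s in (0:ℝ)..1, h (x * s)) * h xbar) := by ring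
      _ ≤ 2 * x * xbar * ((∫ s in (0:ℝ)..1, h (xbar * s)) * h x) := by gcongr
      _ = 2 * (xbar * ∫ s in (0:ℝ)..1, h (xbar * s)) * (x * h x) := by ring
      _ = _ := by rw [← e2]; ring
  have hTk : ∀ x, xbar ≤ x → 1 - F x ≤ k * (x * h x) := by
    intro x hxx
    have hx : 0 < x := hxbar.trans_le hxx
    have e : ∀ z, 0 < z → 1 - F z = z * ∫ s in Ioi (1:ℝ), h (z * s) := by
      intro z hz
      rw [integral_comp_mul_left_Ioi _ _ hz, mul_one, smul_eq_mul, mul_inv_cancel_left₀ hz.ne',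
        ← hFT z hz, add_sub_cancel_left]
    have ii : ∀ z, 0 < z → IntegrableOn (fun s => h (z * s)) (Ioi 1) := by
      intro z hz
      rw [integrableOn_Ioi_comp_mul_left_iff _ _ hz]
      exact hint.mono_set (Ioi_subset_Ioi (by positivity))
    have hle : (∫ s in Ioi (1:ℝ), h (x * s) * h xbar) ≤ ∫ s in Ioi (1:ℝ), h (xbar * s) * h x := by
      apply setIntegral_mono_on ((ii x hx).mul_const _)
        ((ii xbar hxbar).mul_const _) measurableSet_Ioi
      intro s hs
      have hs' : (1:ℝ) < s := hs
      exact hkey x s hx (by linarith) (mul_nonneg (by linarith) (by linarith))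
    rw [integral_mul_const, integral_mul_const] at hle
    have e1 := e x hx
    have e2 := e xbar hxbar
    rw [hFx] at e2
    rw [hk, div_mul_eq_mul_div, le_div_iff₀ (by positivity), e1]
    calc _ = 2 * x * xbar * ((∫ s in Ioi (1:ℝ), h (x * s)) * h xbar) := by ring
      _ ≤ 2 * x * xbar * ((∫ s in Ioi (1:ℝ), h (xbar * s)) * h x) := by gcongr
      _ = 2 * (xbar * ∫ s in Ioi (1:ℝ), h (xbar * s)) * (x * h x) := by ring
      _ = _ := by rw [← e2]; ring
  set c := φ xbar with hc
  have haesm : ∀ g : ℝ → ℝ, ContinuousOn g (Ioi 0) →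
      AEStronglyMeasurable g (volume.restrict (Ioi 0)) := fun g hg =>
    hg.aestronglyMeasurable measurableSet_Ioi
  -- integrability of shifted powers
  have hsh : ∀ d : ℝ, IntegrableOn (fun x => |φ x - d| ^ p * h x) (Ioi 0) := by
    intro d
    have hb : IntegrableOn (fun x => 2 ^ (p-1) * (|φ x| ^ p * h x + |d| ^ p * h x)) (Ioi 0) :=
      (hlhs.add (hint.const_mul _)).const_mul _
    refine Integrable.mono' hb (haesm _ ?_) ?_
    · exact (((hφc.sub continuousOn_const).abs).rpow_const (fun _ _ => Or.inr hp0.le)).mul hcont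
    · filter_upwards [ae_restrict_mem measurableSet_Ioi] with x hx
      have hx' := hpos x hx
      rw [Real.norm_of_nonneg (by positivity)]
      calc _ ≤ 2 ^ (p - 1) * (|φ x| ^ p + |d| ^ p) * h x := by
            gcongr; exact add_rpow_aux p _ _ hp
        _ = _ := by ring
  have hsub : ∀ {g : ℝ → ℝ}, IntegrableOn g (Ioi 0) → IntegrableOn g (Ioi xbar) := fun hg =>
    hg.mono_set (Ioi_subset_Ioi hxbar.le)
  set M := (p * k) ^ p with hM
  have hM0 : 0 ≤ M := by positivity
  have hR : ∫ x in Ioi xbar, |φ x - c| ^ p * h x ≤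
      M * ∫ x in Ioi xbar, x ^ p * |deriv φ x| ^ p * h x := by
    refine le_of_tendsto_of_tendsto
      (intervalIntegral_tendsto_integral_Ioi xbar (hsub (hsh c)) Filter.tendsto_id)
      ((intervalIntegral_tendsto_integral_Ioi xbar (hsub hrhs) Filter.tendsto_id).const_mul M) ?_
    filter_upwards [Filter.eventually_ge_atTop xbar] with R hR
    have hI : Icc xbar R ⊆ Ioi 0 := fun y hy => lt_of_lt_of_le hxbar hy.1
    exact hardy_aux xbar R p k hR hp hk0.le φ (deriv φ) h id (fun x => 1 - F x)
      (fun x hx => hφd x (hI hx)) (hφ'.mono hI) (hcont.mono hI) (fun x hx => (hpos x (hI hx)).le)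
      continuousOn_id (fun x hx => le_of_lt (hI hx))
      (fun x hx => (hFd x (hI hx)).const_sub 1) (fun x hx => hT0 x (hI hx))
      (fun x hx => hTk x hx.1)
  have hL : ∫ x in (0:ℝ)..xbar, |φ x - c| ^ p * h x ≤
      M * ∫ x in (0:ℝ)..xbar, x ^ p * |deriv φ x| ^ p * h x := by
    have ht : ∀ {g : ℝ → ℝ}, IntegrableOn g (Ioi 0) →
        Filter.Tendsto (fun r => ∫ x in r..xbar, g x) (nhdsWithin 0 (Ioo 0 xbar))
          (nhds (∫ x in (0:ℝ)..xbar, g x)) := by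
      intro g hg
      have h1 : IntegrableOn g (uIcc 0 xbar) := by
        rw [uIcc_of_le hxbar.le, integrableOn_Icc_iff_integrableOn_Ioc]
        exact hg.mono_set Ioc_subset_Ioi_self
      have h2 := intervalIntegral.continuousOn_primitive_interval_left h1 0 left_mem_uIcc
      rw [uIcc_of_le hxbar.le] at h2
      exact h2.tendsto.mono_left (nhdsWithin_mono _ Ioo_subset_Icc_self)
    have : (nhdsWithin (0:ℝ) (Ioo 0 xbar)).NeBot := by
      rw [← mem_closure_iff_nhdsWithin_neBot, closure_Ioo hxbar.ne]
      exact left_mem_Icc.2 hxbar.le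
    refine le_of_tendsto_of_tendsto (ht (hsh c)) ((ht hrhs).const_mul M) ?_
    filter_upwards [self_mem_nhdsWithin] with r hr
    have hI : ∀ x ∈ Icc (-xbar) (-r), 0 < -x := fun x hx => by linarith [hx.2, hr.1]
    have hmap : MapsTo (fun x : ℝ => -x) (Icc (-xbar) (-r)) (Ioi 0) := hI
    have := hardy_aux (-xbar) (-r) p k (by linarith [hr.2]) hp hk0.le (fun x => φ (-x))
      (fun x => -deriv φ (-x)) (fun x => h (-x)) (fun x => -x) (fun x => F (-x))
      (fun x hx => by
        have := (hφd (-x) (hI x hx)).scomp x (hasDerivAt_neg x)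
        simpa [Function.comp_def] using this)
      ((hφ'.comp continuousOn_neg hmap).neg) (hcont.comp continuousOn_neg hmap)
      (fun x hx => (hpos _ (hI x hx)).le) continuousOn_neg (fun x hx => (hI x hx).le)
      (fun x hx => by
        have := (hFd (-x) (hI x hx)).scomp x (hasDerivAt_neg x)
        simpa [Function.comp_def] using this)
      (fun x hx => hF0 _ (hI x hx)) (fun x hx => hFk _ (hI x hx) (by linarith [hx.1]))
    simp only [neg_neg, abs_neg] at this
    rw [intervalIntegral.integral_comp_neg (fun x => |φ x - φ xbar| ^ p * h x),
      intervalIntegral.integral_comp_neg (fun x => x ^ p * |deriv φ x| ^ p * h x)] at this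
    simpa only [neg_neg] using this
  have hmain : ∫ x in Ioi 0, |φ x - c| ^ p * h x ≤
      M * ∫ x in Ioi 0, x ^ p * |deriv φ x| ^ p * h x := by
    rw [← intervalIntegral.integral_interval_add_Ioi (hsh c) (hsub (hsh c)),
      ← intervalIntegral.integral_interval_add_Ioi hrhs (hsub hrhs), mul_add]
    exact add_le_add hL hR
  -- first moments
  have hI1 : IntegrableOn (fun x => |φ x - c| * h x) (Ioi 0) := by
    have hb : IntegrableOn (fun x => |φ x - c| ^ p * h x + p * h x) (Ioi 0) :=
      (hsh c).add (hint.const_mul _)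
    refine Integrable.mono' hb (haesm _ ?_) ?_
    · exact ((hφc.sub continuousOn_const).abs).mul hcont
    · filter_upwards [ae_restrict_mem measurableSet_Ioi] with x hx
      have hx' := hpos x hx
      rw [Real.norm_of_nonneg (by positivity), ← add_mul]
      have := young_aux p 1 (|φ x - c|) hp zero_le_one (abs_nonneg _)
      simp only [Real.one_rpow, mul_one] at this
      have h2 : |φ x - c| ≤ p * |φ x - c| := le_mul_of_one_le_left (abs_nonneg _) hp
      exact mul_le_mul_of_nonneg_right (by linarith) hx'.le
  have hI2 : IntegrableOn (fun x => (φ x - c) * h x) (Ioi 0) := by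
    refine Integrable.mono' hI1 (haesm _ ((hφc.sub continuousOn_const).mul hcont)) ?_
    filter_upwards [ae_restrict_mem measurableSet_Ioi] with x hx
    rw [norm_mul, Real.norm_eq_abs, Real.norm_of_nonneg (hpos x hx).le]
  set E := ∫ y in Ioi (0 : ℝ), φ y * h y with hE
  set S := ∫ x in Ioi 0, |φ x - c| ^ p * h x with hS
  have hEc : E - c = ∫ x in Ioi 0, (φ x - c) * h x := by
    have : E = ∫ x in Ioi 0, ((φ x - c) * h x + c * h x) := by
      rw [hE]; congr 1; ext x; ring
    rw [this, integral_add hI2 (hint.const_mul _), integral_const_mul, hnorm]; ring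
  set a := ∫ x in Ioi 0, |φ x - c| * h x with ha
  have ha0 : 0 ≤ a := setIntegral_nonneg measurableSet_Ioi
    (fun x hx => mul_nonneg (abs_nonneg _) (hpos x hx).le)
  have hEa : |E - c| ≤ a := by
    rw [hEc]
    refine (abs_integral_le_integral_abs).trans (le_of_eq ?_)
    apply setIntegral_congr_fun measurableSet_Ioi
    intro x hx
    simp only [abs_mul, abs_of_pos (hpos x hx)]
  have haS : a ^ p ≤ S := by
    have h1 : ∫ x in Ioi 0, p * a ^ (p-1) * (|φ x - c| * h x) ≤
        ∫ x in Ioi 0, ((p - 1) * a ^ p * h x + |φ x - c| ^ p * h x) := by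
      apply setIntegral_mono_on (hI1.const_mul _) ((hint.const_mul _).add (hsh c)) measurableSet_Ioi
      intro x hx
      have := mul_le_mul_of_nonneg_right (young_aux p a (|φ x - c|) hp ha0 (abs_nonneg _))
        (hpos x hx).le
      simp only [Pi.add_apply]
      linarith
    rw [integral_add (hint.const_mul _) (hsh c), integral_const_mul, integral_const_mul, hnorm,
      ← ha, ← hS] at h1
    have h2 : a ^ (p-1) * a = a ^ p := by
      conv_rhs => rw [show p = (p - 1) + 1 by ring]
      rw [Real.rpow_add_one' ha0 (by linarith)]
    have h3 : p * a ^ (p-1) * a = p * a ^ p := by rw [mul_assoc, h2]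
    linarith
  have hEp : |E - c| ^ p ≤ S := (Real.rpow_le_rpow (abs_nonneg _) hEa hp0.le).trans haS
  have hfin : ∫ x in Ioi 0, |φ x - E| ^ p * h x ≤ 2 ^ p * S := by
    have h1 : ∫ x in Ioi 0, |φ x - E| ^ p * h x ≤
        ∫ x in Ioi 0, 2 ^ (p-1) * (|φ x - c| ^ p * h x + |E - c| ^ p * h x) := by
      apply setIntegral_mono_on (hsh E) (((hsh c).add (hint.const_mul _)).const_mul _)
        measurableSet_Ioi
      intro x hx
      have := mul_le_mul_of_nonneg_right (add_rpow_aux p (φ x - c) (E - c) hp) (hpos x hx).le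
      rw [sub_sub_sub_cancel_right] at this
      simp only [Pi.add_apply]
      linarith
    rw [integral_const_mul, integral_add (hsh c) (hint.const_mul _), integral_const_mul, hnorm,
      ← hS, mul_one] at h1
    have h2 : (2:ℝ) ^ p = 2 ^ (p-1) * 2 := by
      rw [← Real.rpow_add_one (by norm_num)]; ring_nf
    calc _ ≤ _ := h1
      _ ≤ 2 ^ (p-1) * (S + S) := by gcongr
      _ = _ := by rw [h2]; ring
  have hconst : (p * (1 / (xbar * h xbar))) ^ p = 2 ^ p * M := by
    rw [hM, ← Real.mul_rpow (by norm_num) (by positivity), hk]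
    congr 1
    field_simp
  rw [hconst, mul_assoc]
  exact hfin.trans (by gcongr)
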